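/- Volume estimate: Let Σ = Graph(u) be an entire graphical smooth self-shrinker in ℝⁿ⁺¹ and let M_R = sup_{|x|≤R} |u(x)|. Then Vol(Σ ∩ B_R) ≤ 2ωₙ Rⁿ (1 + R² + M_R²) for every R > 0, where B_R is the ball of radius R in ℝⁿ⁺¹ and ωₙ is half the volume of the unit n-sphere. -/

import Mathlib

open Real MeasureTheory Metric Filter
open scoped RealInnerProductSpace ENNReal NNReal

noncomputable section

abbrev E (n : ℕ) : Type := EuclideanSpace ℝ (Fin n)

variable {n : ℕ}

/-- `√(1 + |Du|²)`, the area element of the graph of `u`. -/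
def aEl (u : E n → ℝ) (x : E n) : ℝ := Real.sqrt (1 + ‖gradient u x‖ ^ 2)

/-- The vector field `Du/√(1+|Du|²)`. -/
def Vfield (u : E n → ℝ) (x : E n) : E n := (aEl u x)⁻¹ • gradient u x

/-- `div (Du/√(1+|Du|²))`. -/
def divV (u : E n → ℝ) (x : E n) : ℝ :=
  ∑ i, fderiv ℝ (fun y => Vfield u y i) x (EuclideanSpace.single i 1)

/-- The self-shrinker equation for an entire graph. -/
def ShrinkerEq (u : E n → ℝ) : Prop :=
  ∀ x, divV u x = (⟪x, gradient u x⟫ - u x) / (2 * aEl u x)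

/-- The mean curvature of the graph of `u` with respect to the upward unit normal. -/
def meanCurv (u : E n → ℝ) (x : E n) : ℝ := -divV u x

/-- The position vector `X = (x, u x)` of a point of the graph. -/
def Pos (u : E n → ℝ) (x : E n) : E (n + 1) :=
  (WithLp.equiv 2 (Fin (n + 1) → ℝ)).symm (Fin.snoc ((WithLp.equiv 2 (Fin n → ℝ)) x) (u x))

/-- The upward unit normal `n = (-Du, 1)/√(1+|Du|²)` at the point of the graph over `x`. -/
def NmlAt (u : E n → ℝ) (x : E n) : E (n + 1) :=
  (WithLp.equiv 2 (Fin (n + 1) → ℝ)).symm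
    (Fin.snoc (fun i => -(Vfield u x i)) ((aEl u x)⁻¹))

/-- Projection of `ℝ^{n+1}` onto the first `n` coordinates. -/
def projE (p : E (n + 1)) : E n :=
  (WithLp.equiv 2 (Fin n → ℝ)).symm fun i => p i.castSucc

/-- The unit normal of the graph, extended to `ℝ^{n+1}` independently of the last coordinate. -/
def Nml (u : E n → ℝ) (p : E (n + 1)) : E (n + 1) := NmlAt u (projE p)

/-- The inverse induced metric `g^{ij} = δ_{ij} - u_i u_j/(1+|Du|²)` of the graph. -/
def ginv (u : E n → ℝ) (x : E n) (i j : Fin n) : ℝ :=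
  (if i = j then 1 else 0) - gradient u x i * gradient u x j / (aEl u x) ^ 2

/-- The Hessian `u_{ij}` of `u`. -/
def hess (u : E n → ℝ) (x : E n) (i j : Fin n) : ℝ :=
  fderiv ℝ (fun y => gradient u y j) x (EuclideanSpace.single i 1)

/-- `|A|²`, the squared norm of the second fundamental form of the graph of `u`:
`|A|² = g^{ik} g^{jl} h_{ij} h_{kl}` with `h_{ij} = u_{ij}/√(1+|Du|²)`. -/
def A2 (u : E n → ℝ) (x : E n) : ℝ :=
  (∑ i, ∑ j, ∑ k, ∑ l, ginv u x i k * ginv u x j l * hess u x i j * hess u x k l) /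
    (aEl u x) ^ 2

/-- Coordinate components `g^{ij} ∂_j f` of the tangential gradient. -/
def gradCoord (u f : E n → ℝ) (x : E n) (i : Fin n) : ℝ :=
  ∑ j, ginv u x i j * gradient f x j

/-- The tangential gradient `∇_Σ f` (for `f` defined on the base, pulled back to the graph),
as a vector in `ℝ^{n+1}`. -/
def gradSigma (u f : E n → ℝ) (x : E n) : E (n + 1) :=
  (WithLp.equiv 2 (Fin (n + 1) → ℝ)).symm
    (Fin.snoc (fun i => gradCoord u f x i) (∑ i, gradient u x i * gradCoord u f x i))

/-- The Laplace–Beltrami operator of the graph: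
`Δ_Σ f = (1/√g) ∂_i (√g g^{ij} ∂_j f)`. -/
def lapSigma (u f : E n → ℝ) (x : E n) : ℝ :=
  (aEl u x)⁻¹ *
    ∑ i, fderiv ℝ (fun y => aEl u y * gradCoord u f y i) x (EuclideanSpace.single i 1)

/-- The tangential gradient `∇_Σ η` of an ambient function `η : ℝ^{n+1} → ℝ` along the graph:
the ambient gradient minus its normal component. -/
def gradSigmaAmb (u : E n → ℝ) (η : E (n + 1) → ℝ) (x : E n) : E (n + 1) :=
  gradient η (Pos u x) - ⟪gradient η (Pos u x), NmlAt u x⟫ • NmlAt u x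

/-- `Vol(Σ ∩ B_R)`: the area of the part of the graph inside the ball of radius `R`
in `ℝ^{n+1}`, computed by the area formula. -/
def sVol (u : E n → ℝ) (R : ℝ) : ℝ := ∫ x in {x : E n | ‖Pos u x‖ ≤ R}, aEl u x

/-- `M_R = sup_{|x| ≤ R} |u|`. -/
def supBall (u : E n → ℝ) (R : ℝ) : ℝ := ⨆ x : Metric.closedBall (0 : E n) R, |u x.1|

end

/-- `ωₙ`: half of the volume of the unit `n`-sphere in `ℝ^{n+1}`. -/
noncomputable def halfSphereVol (n : ℕ) : ℝ :=
  (μH[(n : ℝ)] (Metric.sphere (0 : E (n + 1)) 1)).toReal / 2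

theorem exists_Icc_of_dist_le {S : Set ℝ} {d : ℝ} (h0 : (0 : ℝ) ∈ S)
    (h : ∀ x ∈ S, ∀ y ∈ S, |x - y| ≤ d) :
    ∃ m, m ≤ 0 ∧ 0 ≤ m + d ∧ ∀ x ∈ S, m ≤ x ∧ x ≤ m + d := by
  have hb : BddBelow S := ⟨-d, fun x hx => by
    have := abs_le.1 (h x hx 0 h0); linarith [this.1]⟩
  have hle : ∀ x ∈ S, sInf S ≤ x ∧ x ≤ sInf S + d := fun x hx => by
    refine ⟨csInf_le hb hx, ?_⟩
    have : x - d ≤ sInf S := le_csInf ⟨0, h0⟩ fun y hy => by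
      have := abs_le.1 (h x hx y hy); linarith [this.2]
    linarith
  exact ⟨sInf S, (hle 0 h0).1, (hle 0 h0).2, hle⟩

theorem volume_sector_le {n : ℕ} {r d : ℝ} (hr : 0 ≤ r) (s : Set (E (n + 1)))
    (hd : ∀ x ∈ s, ∀ y ∈ s, dist x y ≤ d) (hd0 : 0 ≤ d) :
    volume {x : E (n + 1) | (r < ‖x‖ ∧ ‖x‖ < 1) ∧ ‖x‖⁻¹ • x ∈ s} ≤
      ENNReal.ofReal ((1 - r + d ^ 2 / 2) * d ^ n) := by
  set T := {x : E (n + 1) | (r < ‖x‖ ∧ ‖x‖ < 1) ∧ ‖x‖⁻¹ • x ∈ s} with hT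
  rcases T.eq_empty_or_nonempty with he | ⟨x₀, ⟨h₀, h₁⟩, hx₀⟩
  · simp [he]
  set p := ‖x₀‖⁻¹ • x₀ with hp
  have hpn : ‖p‖ = 1 := by
    rw [hp, norm_smul, norm_inv, norm_norm, inv_mul_cancel₀ (by linarith)]
  obtain ⟨b, hb⟩ := Orthonormal.exists_orthonormalBasis_extension_of_card_eq (𝕜 := ℝ)
    (E := E (n + 1)) (ι := Fin (n + 1)) (by simp) (v := fun _ => p) (s := {0}) (by
      refine ⟨fun i => by simp [hpn], ?_⟩
      rintro ⟨i, rfl⟩ ⟨j, rfl⟩ hij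
      exact absurd rfl hij)
  have hb0 : b 0 = p := hb 0 rfl
  have hcoord : ∀ i : Fin n, ∃ m, m ≤ 0 ∧ 0 ≤ m + d ∧
      ∀ x ∈ (fun a => ⟪b i.succ, a⟫) '' s, m ≤ x ∧ x ≤ m + d := fun i => by
    refine exists_Icc_of_dist_le ⟨p, hx₀, ?_⟩ ?_
    · simp only [← hb0]
      exact b.orthonormal.2 (Fin.succ_ne_zero i)
    · rintro _ ⟨a, ha, rfl⟩ _ ⟨a', ha', rfl⟩
      simp only [← inner_sub_right]
      calc _ ≤ ‖b i.succ‖ * ‖a - a'‖ := abs_real_inner_le_norm _ _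
        _ ≤ d := by rw [b.norm_eq_one, one_mul, ← dist_eq_norm]; exact hd a ha a' ha'
  choose m hm0 hmd hm using hcoord
  let lo : Fin (n + 1) → ℝ := Fin.cons (r - d ^ 2 / 2) m
  let hi : Fin (n + 1) → ℝ := Fin.cons 1 fun i => m i + d
  have hmp : MeasurePreserving (fun x : E (n + 1) => (WithLp.ofLp (b.repr x) : Fin (n + 1) → ℝ)) :=
    (EuclideanSpace.volume_preserving_symm_measurableEquiv_toLp (Fin (n + 1))).comp
      b.measurePreserving_repr
  have hsub : T ⊆ (fun x : E (n + 1) => (WithLp.ofLp (b.repr x) : Fin (n + 1) → ℝ)) ⁻¹'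
      Set.Icc lo hi := by
    rintro x ⟨⟨hx1, hx2⟩, hxs⟩
    have hxpos : 0 < ‖x‖ := by linarith
    set a := ‖x‖⁻¹ • x with ha
    have hxa : x = ‖x‖ • a := by rw [ha, smul_inv_smul₀ hxpos.ne']
    have han : ‖a‖ = 1 := by
      rw [ha, norm_smul, norm_inv, norm_norm, inv_mul_cancel₀ hxpos.ne']
    have hrepr : ∀ i, b.repr x i = ‖x‖ * ⟪b i, a⟫ := fun i => by
      rw [b.repr_apply_apply]; conv_lhs => rw [hxa]
      rw [inner_smul_right]
    have h0 : 1 - d ^ 2 / 2 ≤ ⟪b 0, a⟫ ∧ ⟪b 0, a⟫ ≤ 1 := by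
      have h1 := norm_sub_sq_real (b 0) a
      rw [b.norm_eq_one, han, hb0, ← dist_eq_norm] at h1
      have h2 := hd p hx₀ a hxs
      have h3 : dist p a ^ 2 ≤ d ^ 2 := by gcongr
      rw [hb0]
      constructor <;> nlinarith [sq_nonneg (dist p a)]
    have key : ∀ i, lo i ≤ b.repr x i ∧ b.repr x i ≤ hi i := by
      intro i
      rw [hrepr]
      refine Fin.cases ?_ (fun i => ?_) i
      · simp only [lo, hi, Fin.cons_zero]
        constructor <;> nlinarith [sq_nonneg d, h0.1, h0.2]
      · simp only [lo, hi, Fin.cons_succ]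
        obtain ⟨h4, h5⟩ := hm i _ ⟨a, hxs, rfl⟩
        simp only at h4 h5
        have := hm0 i
        have := hmd i
        constructor <;> nlinarith
    exact ⟨fun i => (key i).1, fun i => (key i).2⟩
  calc volume T ≤ _ := measure_mono hsub
    _ = volume (Set.Icc lo hi) := hmp.measure_preimage measurableSet_Icc.nullMeasurableSet
    _ = _ := by
      rw [Real.volume_Icc_pi, Fin.prod_univ_succ]
      simp only [lo, hi, Fin.cons_zero, Fin.cons_succ, add_sub_cancel_left, Finset.prod_const,
        Finset.card_univ, Fintype.card_fin]
      rw [← ENNReal.ofReal_pow hd0, ← ENNReal.ofReal_mul (by nlinarith [sq_nonneg d])]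
      congr 2; ring

theorem volume_shell_le_hausdorffMeasure_sphere {n : ℕ} {r : ℝ} (hr : 0 ≤ r) (hr1 : r < 1) :
    volume {x : E (n + 1) | r < ‖x‖ ∧ ‖x‖ < 1} ≤
      ENNReal.ofReal ((1 - r) * (2 - r)) * μH[(n : ℝ)] (sphere (0 : E (n + 1)) 1) := by
  set Sh := {x : E (n + 1) | r < ‖x‖ ∧ ‖x‖ < 1} with hSh
  set c := ENNReal.ofReal ((1 - r) * (2 - r)) with hc
  have hcpos : 0 < (1 - r) * (2 - r) := by nlinarith
  have hc0 : c ≠ 0 := by simpa [hc] using hcpos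
  have hct : c ≠ ∞ := ENNReal.ofReal_ne_top
  have hmeas : Measurable fun x : E (n + 1) => ‖x‖⁻¹ • x := by fun_prop
  have hShm : MeasurableSet Sh :=
    (measurableSet_lt measurable_const measurable_norm).inter
      (measurableSet_lt measurable_norm measurable_const)
  set ν := (volume.restrict Sh).map fun x : E (n + 1) => ‖x‖⁻¹ • x with hν
  have hle : c⁻¹ • ν ≤ μH[(n : ℝ)] := by
    refine Measure.le_hausdorffMeasure _ _ (ENNReal.ofReal (1 - r)) (by simpa using hr1) ?_
    intro s hs
    have hst : ediam s ≠ ∞ := ne_top_of_le_ne_top ENNReal.ofReal_ne_top hs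
    set d := (ediam s).toReal with hd
    have hdr : d ≤ 1 - r := ENNReal.toReal_le_of_le_ofReal (by linarith) hs
    have hd0 : 0 ≤ d := ENNReal.toReal_nonneg
    have h1 : ν s ≤ c * ediam s ^ (n : ℝ) := calc
      ν s ≤ ν (closure s) := measure_mono subset_closure
      _ = volume {x : E (n + 1) | (r < ‖x‖ ∧ ‖x‖ < 1) ∧ ‖x‖⁻¹ • x ∈ closure s} := by
        rw [hν, Measure.map_apply hmeas isClosed_closure.measurableSet,
          Measure.restrict_apply (hmeas isClosed_closure.measurableSet), Set.inter_comm]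
        rfl
      _ ≤ ENNReal.ofReal ((1 - r + d ^ 2 / 2) * d ^ n) := by
        refine volume_sector_le hr _ (fun x hx y hy => ?_) hd0
        rw [dist_edist, hd, ← ediam_closure]
        refine ENNReal.toReal_mono (by rwa [ediam_closure]) (edist_le_ediam_of_mem hx hy)
      _ ≤ ENNReal.ofReal ((1 - r) * (2 - r) * d ^ n) := by
        gcongr
        nlinarith
      _ = _ := by
        rw [ENNReal.ofReal_mul hcpos.le, ENNReal.rpow_natCast, ENNReal.ofReal_pow hd0, hd,
          ENNReal.ofReal_toReal hst]
    rw [Measure.smul_apply, smul_eq_mul, mul_comm, ← div_eq_mul_inv]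
    exact ENNReal.div_le_of_le_mul' h1
  have h2 := hle (sphere (0 : E (n + 1)) 1)
  rw [Measure.smul_apply, smul_eq_mul, mul_comm, ← div_eq_mul_inv,
    ENNReal.div_le_iff' hc0 hct] at h2
  refine le_trans ?_ h2
  rw [hν, Measure.map_apply hmeas isClosed_sphere.measurableSet,
    Measure.restrict_apply (hmeas isClosed_sphere.measurableSet)]
  refine measure_mono fun x hx => ⟨?_, hx⟩
  have : ‖x‖ ≠ 0 := by linarith [hx.1]
  simp [norm_smul, this]

theorem hausdorffMeasure_sphere_lt_top (n : ℕ) :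
    μH[(n : ℝ)] (sphere (0 : E (n + 1)) 1) < ∞ := by
  let c : Fin (n + 1) → ℝ → (Fin n → ℝ) → E (n + 1) := fun i t y =>
    WithLp.toLp 2 (Fin.insertNth i t y)
  let F : Fin (n + 1) → ℝ → (Fin n → ℝ) → E (n + 1) := fun i t y => ‖c i t y‖⁻¹ • c i t y
  have hc0 : ∀ i, ∀ t : ℝ, t ≠ 0 → ∀ y, c i t y ≠ 0 := fun i t ht y h => by
    have : c i t y i = 0 := by rw [h]; rfl
    simp only [c, Fin.insertNth_apply_same] at this
    exact ht this
  have hcs : ∀ i t, ContDiff ℝ 1 (c i t) := fun i t => by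
    rw [contDiff_euclidean]
    intro j
    refine Fin.succAboveCases i ?_ (fun k => ?_) j
    · simpa [c] using contDiff_const
    · simpa [c] using contDiff_apply ℝ ℝ k
  have hFs : ∀ i, ∀ t : ℝ, t ≠ 0 → ContDiff ℝ 1 (F i t) := fun i t ht =>
    (((hcs i t).norm ℝ (hc0 i t ht)).inv fun y => norm_ne_zero_iff.2 (hc0 i t ht y)).smul (hcs i t)
  have hfin : ∀ i, ∀ t : ℝ, t ≠ 0 → μH[(n : ℝ)] (F i t '' Set.Icc (-1) 1) < ∞ := fun i t ht => by
    obtain ⟨K, hK⟩ := (hFs i t ht).contDiffOn.exists_lipschitzOnWith (s := Set.Icc (-1) 1)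
      one_ne_zero (convex_Icc _ _) isCompact_Icc
    refine (hK.hausdorffMeasure_image_le n.cast_nonneg).trans_lt ?_
    have h1 : (μH[(n : ℝ)] : Measure (Fin n → ℝ)) = volume := by
      simpa using hausdorffMeasure_pi_real (ι := Fin n)
    rw [h1]
    exact ENNReal.mul_lt_top (ENNReal.rpow_lt_top_of_nonneg n.cast_nonneg ENNReal.coe_ne_top)
      isCompact_Icc.measure_lt_top
  have hcov : sphere (0 : E (n + 1)) 1 ⊆
      ⋃ i, (F i 1 '' Set.Icc (-1) 1 ∪ F i (-1) '' Set.Icc (-1) 1) := by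
    intro x hx
    have hxn : ‖x‖ = 1 := by simpa using hx
    obtain ⟨i, -, hi⟩ := Finset.exists_max_image Finset.univ (fun i => |x i|) ⟨0, Finset.mem_univ _⟩
    have hi0 : 0 < |x i| := by
      rw [abs_pos]
      intro h0
      have : x = 0 := by
        ext j
        have := hi j (Finset.mem_univ _)
        rw [h0, abs_zero] at this
        simpa using this
      rw [this, norm_zero] at hxn
      exact zero_ne_one hxn
    have hrep : ∀ t : ℝ, |t| = 1 → x i = t * |x i| → x ∈ F i t '' Set.Icc (-1) 1 := by
      intro t ht hti
      refine ⟨fun k => x (i.succAbove k) / |x i|, ?_, ?_⟩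
      · have : ∀ k, |x (i.succAbove k) / abs (x i)| ≤ 1 := fun k => by
          rw [abs_div, abs_abs, div_le_one hi0]
          exact hi _ (Finset.mem_univ _)
        exact ⟨fun k => (abs_le.1 (this k)).1, fun k => (abs_le.1 (this k)).2⟩
      · have hcx : c i t (fun k => x (i.succAbove k) / |x i|) = |x i|⁻¹ • x := by
          ext j
          refine Fin.succAboveCases i ?_ (fun k => ?_) j
          · simp only [c, Fin.insertNth_apply_same, PiLp.smul_apply, smul_eq_mul]
            conv_rhs => rw [hti]
            field_simp
            simp [ht, abs_mul]
          · simp only [c, Fin.insertNth_apply_succAbove, PiLp.smul_apply, smul_eq_mul]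
            field_simp
        simp only [F, hcx, norm_smul, norm_inv, hxn, Real.norm_eq_abs, abs_abs, mul_one, inv_inv]
        rw [smul_smul, mul_inv_cancel₀ hi0.ne', one_smul]
    refine Set.mem_iUnion.2 ⟨i, ?_⟩
    rcases le_total 0 (x i) with h | h
    · exact Or.inl (hrep 1 (by simp) (by rw [abs_of_nonneg h, one_mul]))
    · exact Or.inr (hrep (-1) (by simp) (by rw [abs_of_nonpos h]; ring))
  refine (measure_mono hcov).trans_lt ((measure_iUnion_fintype_le _ _).trans_lt ?_)
  refine ENNReal.sum_lt_top.2 fun i _ => (measure_union_le _ _).trans_lt ?_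
  exact ENNReal.add_lt_top.2 ⟨hfin i 1 one_ne_zero, hfin i (-1) (by norm_num)⟩

theorem volume_shell {n : ℕ} {r : ℝ} (hr : 0 ≤ r) (hr1 : r < 1) :
    volume {x : E (n + 1) | r < ‖x‖ ∧ ‖x‖ < 1} =
      ENNReal.ofReal ((1 - r ^ (n + 1)) * volume.real (ball (0 : E (n + 1)) 1)) := by
  have h : {x : E (n + 1) | r < ‖x‖ ∧ ‖x‖ < 1} = ball 0 1 \ closedBall 0 r := by
    ext x; simp [and_comm]
  rw [h, measure_sdiff (closedBall_subset_ball hr1) measurableSet_closedBall.nullMeasurableSet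
    measure_closedBall_lt_top.ne, Measure.addHaar_closedBall _ _ hr, sub_mul, one_mul,
    ENNReal.ofReal_sub _ (by positivity), ENNReal.ofReal_mul (by positivity),
    ofReal_measureReal measure_ball_lt_top.ne]
  simp

theorem mul_volume_ball_le_hausdorffMeasure_sphere (n : ℕ) :
    (n + 1) * volume.real (ball (0 : E (n + 1)) 1) ≤
      (μH[(n : ℝ)] (sphere (0 : E (n + 1)) 1)).toReal := by
  set b := volume.real (ball (0 : E (n + 1)) 1)
  set S := (μH[(n : ℝ)] (sphere (0 : E (n + 1)) 1)).toReal with hS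
  have key : ∀ r ∈ Set.Ico (0 : ℝ) 1, (∑ k ∈ Finset.range (n + 1), r ^ k) * b ≤ (2 - r) * S := by
    rintro r ⟨hr, hr1⟩
    have h1 := volume_shell_le_hausdorffMeasure_sphere (n := n) hr hr1
    rw [volume_shell hr hr1, ← ENNReal.ofReal_toReal (hausdorffMeasure_sphere_lt_top n).ne, ← hS,
      ← ENNReal.ofReal_mul (by nlinarith), ENNReal.ofReal_le_ofReal_iff
        (mul_nonneg (by nlinarith) ENNReal.toReal_nonneg), ← geom_sum_mul_neg] at h1
    have h2 : 0 < 1 - r := by linarith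
    nlinarith
  have hlim : Tendsto (fun r : ℝ => (∑ k ∈ Finset.range (n + 1), r ^ k) * b)
      (nhdsWithin 1 (Set.Iio 1)) (nhds ((∑ k ∈ Finset.range (n + 1), (1 : ℝ) ^ k) * b)) :=
    (Continuous.tendsto (by fun_prop) 1).mono_left nhdsWithin_le_nhds
  have hlim' : Tendsto (fun r : ℝ => (2 - r) * S)
      (nhdsWithin 1 (Set.Iio 1)) (nhds ((2 - 1) * S)) :=
    (Continuous.tendsto (by fun_prop) 1).mono_left nhdsWithin_le_nhds
  have := le_of_tendsto_of_tendsto hlim hlim' (by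
    filter_upwards [Ico_mem_nhdsLT (zero_lt_one' ℝ)] with r hr using key r hr)
  norm_num at this
  exact this

theorem sqrt_pi_mul_Gamma_add_half_ge (n : ℕ) :
    Gamma ((n + 1 : ℝ) / 2) ≤ √π * Gamma ((n : ℝ) / 2 + 1) := by
  induction n using Nat.twoStepInduction with
  | zero => simp [Real.Gamma_one_half_eq, -one_div]
  | one =>
    have h : ((1 : ℕ) : ℝ) / 2 + 1 = 1 / 2 + 1 := by norm_num
    have h' : (((1 : ℕ) : ℝ) + 1) / 2 = 1 := by norm_num
    rw [h, h', Gamma_add_one (by norm_num), Gamma_one_half_eq, Gamma_one]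
    nlinarith [Real.mul_self_sqrt pi_pos.le, pi_gt_three]
  | more n ih _ =>
    have h1 : ((n + 2 : ℕ) + 1 : ℝ) / 2 = (n + 1 : ℝ) / 2 + 1 := by push_cast; ring
    have h2 : ((n + 2 : ℕ) : ℝ) / 2 + 1 = ((n : ℝ) / 2 + 1) + 1 := by push_cast; ring
    rw [h1, h2, Gamma_add_one (by positivity), Gamma_add_one (s := (n : ℝ) / 2 + 1) (by positivity)]
    have : 0 < Gamma ((n + 1 : ℝ) / 2) := Gamma_pos_of_pos (by positivity)
    have hn : (0 : ℝ) ≤ n := n.cast_nonneg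
    nlinarith

theorem volume_real_ball_one (n : ℕ) :
    volume.real (ball (0 : E n) 1) = √π ^ n / Gamma ((n : ℝ) / 2 + 1) := by
  rcases Nat.eq_zero_or_pos n with rfl | hn
  · have : ball (0 : E 0) 1 = Set.univ := by ext x; simp [Subsingleton.elim x 0]
    rw [this]
    have h := (EuclideanSpace.volume_preserving_symm_measurableEquiv_toLp
      (Fin 0)).measure_preimage MeasurableSet.univ.nullMeasurableSet
    rw [Set.preimage_univ, volume_pi, Measure.pi_of_empty] at h
    simp [Measure.real, h]
  · have : Nonempty (Fin n) := ⟨⟨0, hn⟩⟩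
    rw [Measure.real, EuclideanSpace.volume_ball]
    simp only [ENNReal.ofReal_one, one_pow, one_mul, Fintype.card_fin]
    rw [ENNReal.toReal_ofReal]
    have : 0 < Gamma ((n : ℝ) / 2 + 1) := Gamma_pos_of_pos (by positivity)
    positivity

theorem two_mul_volume_ball_le (n : ℕ) :
    2 * volume.real (ball (0 : E n) 1) ≤ (n + 1) * volume.real (ball (0 : E (n + 1)) 1) := by
  rw [volume_real_ball_one, volume_real_ball_one]
  have h1 : ((n + 1 : ℕ) : ℝ) / 2 + 1 = (n + 1 : ℝ) / 2 + 1 := by push_cast; ring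
  rw [h1, Gamma_add_one (s := (n + 1 : ℝ) / 2) (by positivity)]
  have h2 : 0 < Gamma ((n + 1 : ℝ) / 2) := Gamma_pos_of_pos (by positivity)
  have h3 : 0 < Gamma ((n : ℝ) / 2 + 1) := Gamma_pos_of_pos (by positivity)
  have h4 : (n + 1 : ℝ) * (√π ^ (n + 1) / ((n + 1 : ℝ) / 2 * Gamma ((n + 1 : ℝ) / 2))) =
      2 * (√π ^ n * (√π / Gamma ((n + 1 : ℝ) / 2))) := by
    rw [pow_succ]; field_simp
  rw [h4, div_eq_mul_one_div]
  have h5 : 1 / Gamma ((n : ℝ) / 2 + 1) ≤ √π / Gamma ((n + 1 : ℝ) / 2) := by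
    rw [div_le_div_iff₀ h3 h2, one_mul]; exact sqrt_pi_mul_Gamma_add_half_ge n
  gcongr

/-- `χ` is a `C¹` antitone cutoff function equal to `1` on `(-∞, r]` and to `0` on `[R, ∞)`. -/
structure IsCutoff (χ : ℝ → ℝ) (r R : ℝ) : Prop where
  contDiff : ContDiff ℝ 1 χ
  antitone : Antitone χ
  eq_one : ∀ s ≤ r, χ s = 1
  eq_zero : ∀ s, R ≤ s → χ s = 0

theorem exists_isCutoff {r R : ℝ} (h : r < R) : ∃ χ, IsCutoff χ r R := by
  have hR : 0 < R - r := sub_pos.2 h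
  refine ⟨fun s => smoothTransition ((R - s) / (R - r)), ?_, ?_, ?_, ?_⟩
  · exact (smoothTransition.contDiff (n := 1)).comp (by fun_prop)
  · intro s t hst
    exact smoothTransition.monotone (by gcongr)
  · intro s hs
    exact smoothTransition.one_of_one_le (by rw [le_div_iff₀ hR]; linarith)
  · intro s hs
    exact smoothTransition.zero_of_nonpos (div_nonpos_of_nonpos_of_nonneg (by linarith) hR.le)

namespace IsCutoff

variable {χ : ℝ → ℝ} {r R : ℝ}

theorem nonneg (h : IsCutoff χ r R) (s : ℝ) : 0 ≤ χ s := by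
  rw [← h.eq_zero (max s R) (le_max_right _ _)]
  exact h.antitone (le_max_left _ _)

theorem le_one (h : IsCutoff χ r R) (s : ℝ) : χ s ≤ 1 := by
  rw [← h.eq_one (min s r) (min_le_right _ _)]
  exact h.antitone (min_le_left _ _)

theorem continuous (h : IsCutoff χ r R) : Continuous χ := h.contDiff.continuous

theorem continuous_deriv (h : IsCutoff χ r R) : Continuous (deriv χ) :=
  h.contDiff.continuous_deriv le_rfl

theorem hasDerivAt (h : IsCutoff χ r R) (s : ℝ) : HasDerivAt χ (deriv χ s) s :=
  (h.contDiff.differentiable one_ne_zero s).hasDerivAt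

theorem deriv_nonpos (h : IsCutoff χ r R) (s : ℝ) : deriv χ s ≤ 0 := h.antitone.deriv_nonpos

theorem deriv_eq_zero (h : IsCutoff χ r R) {s : ℝ} (hs : R ≤ s) : deriv χ s = 0 := by
  have hmin : IsLocalMin χ s := Eventually.of_forall fun t => by
    rw [h.eq_zero s hs]; exact h.nonneg t
  exact hmin.deriv_eq_zero

theorem integral_mul_deriv_sq (h : IsCutoff χ r (R ^ 2)) (hr : 0 ≤ r) :
    ∫ y in (0 : ℝ)..R, 2 * y * -deriv χ (y ^ 2) = 1 := by
  have := intervalIntegral.integral_eq_sub_of_hasDerivAt (a := 0) (b := R)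
    (f := fun y => -χ (y ^ 2)) (f' := fun y => 2 * y * -deriv χ (y ^ 2))
    (fun y _ => by
      have h1 := ((h.hasDerivAt (y ^ 2)).comp y (hasDerivAt_pow 2 y)).neg
      refine h1.congr_deriv ?_
      simp; ring)
    (Continuous.intervalIntegrable (by have := h.continuous_deriv; fun_prop) _ _)
  rw [this, h.eq_zero _ le_rfl, h.eq_one _ (by simpa using hr)]
  ring

theorem setIntegral_Ioi_le (h : IsCutoff χ r (R ^ 2)) (hr : 0 ≤ r) (hR : 0 < R) (n : ℕ) :
    ∫ y in Set.Ioi (0 : ℝ), y ^ n * (2 * y * -deriv χ (y ^ 2)) ≤ R ^ n := by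
  have hc := h.continuous_deriv
  have h1 : ∫ y in Set.Ioi (0 : ℝ), y ^ n * (2 * y * -deriv χ (y ^ 2)) =
      ∫ y in (0 : ℝ)..R, y ^ n * (2 * y * -deriv χ (y ^ 2)) := by
    rw [intervalIntegral.integral_of_le hR.le]
    refine setIntegral_eq_of_subset_of_forall_sdiff_eq_zero measurableSet_Ioi
      Set.Ioc_subset_Ioi_self fun y hy => ?_
    have hRy : R < y := by
      by_contra hle
      exact hy.2 ⟨hy.1, not_lt.1 hle⟩
    rw [h.deriv_eq_zero (by gcongr)]
    simp
  rw [h1]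
  calc _ ≤ ∫ y in (0 : ℝ)..R, R ^ n * (2 * y * -deriv χ (y ^ 2)) := by
        refine intervalIntegral.integral_mono_on hR.le
          (Continuous.intervalIntegrable (by fun_prop) _ _)
          (Continuous.intervalIntegrable (by fun_prop) _ _) fun y hy => ?_
        have h2 := h.deriv_nonpos (y ^ 2)
        have h3 := hy.1
        have h4 : y ^ n ≤ R ^ n := pow_le_pow_left₀ hy.1 hy.2 n
        exact mul_le_mul_of_nonneg_right h4 (mul_nonneg (by linarith) (by linarith))
    _ = R ^ n := by
      rw [intervalIntegral.integral_const_mul, h.integral_mul_deriv_sq hr, mul_one]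

end IsCutoff

theorem volume_real_ball_prodL2 (n : ℕ) :
    volume.real (ball (0 : WithLp 2 (E n × ℝ)) 1) = volume.real (ball (0 : E (n + 1)) 1) := by
  have h1 : Module.finrank ℝ (WithLp 2 (E n × ℝ)) = n + 1 := by
    rw [(WithLp.linearEquiv 2 ℝ (E n × ℝ)).finrank_eq]; simp
  have h2 : Module.finrank ℝ (E (n + 1)) = n + 1 := by simp
  have : Nontrivial (WithLp 2 (E n × ℝ)) := Module.nontrivial_of_finrank_pos (R := ℝ) (by omega)
  rw [Measure.real, Measure.real, InnerProductSpace.volume_ball, InnerProductSpace.volume_ball,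
    h1, h2]

theorem norm_toLp_prod_sq {n : ℕ} (x : E n) (t : ℝ) :
    ‖(WithLp.toLp 2 (x, t) : WithLp 2 (E n × ℝ))‖ ^ 2 = ‖x‖ ^ 2 + t ^ 2 := by
  rw [WithLp.prod_norm_sq_eq_of_L2]; simp

namespace IsCutoff

variable {χ : ℝ → ℝ} {r R : ℝ} {n : ℕ}

theorem hasCompactSupport_of_eq_zero {f : E n × ℝ → ℝ}
    (hf : ∀ p, R ^ 2 ≤ ‖p.1‖ ^ 2 + p.2 ^ 2 → f p = 0) (hR : 0 < R) : HasCompactSupport f := by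
  refine HasCompactSupport.intro (isCompact_closedBall (0 : E n × ℝ) R) fun p hp => hf p ?_
  rw [mem_closedBall, dist_zero_right, Prod.norm_def] at hp
  rcases lt_max_iff.1 (not_le.1 hp) with h | h
  · nlinarith [sq_nonneg p.2]
  · rw [Real.norm_eq_abs] at h
    nlinarith [sq_nonneg ‖p.1‖, sq_abs p.2]

theorem integrable_norm_mul_deriv (h : IsCutoff χ r (R ^ 2)) (hR : 0 < R) :
    Integrable fun p : E n × ℝ => 2 * ‖p.1‖ * -deriv χ (‖p.1‖ ^ 2 + p.2 ^ 2) := by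
  have hc := h.continuous_deriv
  refine Continuous.integrable_of_hasCompactSupport (by fun_prop)
    (hasCompactSupport_of_eq_zero (fun p hp => ?_) hR)
  rw [h.deriv_eq_zero hp]; simp

theorem integral_norm_mul_deriv_le (h : IsCutoff χ r (R ^ 2)) (hr : 0 ≤ r) (hR : 0 < R) :
    ∫ p : E n × ℝ, 2 * ‖p.1‖ * -deriv χ (‖p.1‖ ^ 2 + p.2 ^ 2) ≤
      (n + 1) * volume.real (ball (0 : E (n + 1)) 1) * R ^ n := by
  have hc := h.continuous_deriv
  set f : ℝ → ℝ := fun y => 2 * y * -deriv χ (y ^ 2) with hf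
  have hmp := WithLp.volume_preserving_toLp (E n) ℝ
  have hemb : MeasurableEmbedding (WithLp.toLp 2 : E n × ℝ → WithLp 2 (E n × ℝ)) :=
    (MeasurableEquiv.toLp 2 (E n × ℝ)).measurableEmbedding
  have hdim : Module.finrank ℝ (WithLp 2 (E n × ℝ)) = n + 1 := by
    rw [(WithLp.linearEquiv 2 ℝ (E n × ℝ)).finrank_eq]; simp
  have : Nontrivial (WithLp 2 (E n × ℝ)) := Module.nontrivial_of_finrank_pos (R := ℝ) (by omega)
  calc _ ≤ ∫ p : E n × ℝ, f ‖(WithLp.toLp 2 p : WithLp 2 (E n × ℝ))‖ := by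
        refine integral_mono (h.integrable_norm_mul_deriv hR)
          (Continuous.integrable_of_hasCompactSupport (by fun_prop)
            (hasCompactSupport_of_eq_zero (fun p hp => ?_) hR)) fun p => ?_
        · simp only [hf]
          rw [norm_toLp_prod_sq p.1 p.2, h.deriv_eq_zero hp]; simp
        · simp only [hf]
          rw [norm_toLp_prod_sq p.1 p.2]
          have h1 := h.deriv_nonpos (‖p.1‖ ^ 2 + p.2 ^ 2)
          have h2 : ‖p.1‖ ≤ ‖(WithLp.toLp 2 p : WithLp 2 (E n × ℝ))‖ := by
            refine (sq_le_sq₀ (norm_nonneg _) (norm_nonneg _)).1 ?_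
            rw [norm_toLp_prod_sq p.1 p.2]
            nlinarith [sq_nonneg p.2]
          exact mul_le_mul_of_nonneg_right (by linarith) (by linarith)
    _ = ∫ y : WithLp 2 (E n × ℝ), f ‖y‖ := hmp.integral_comp hemb fun y => f ‖y‖
    _ = (n + 1) * volume.real (ball (0 : E (n + 1)) 1) *
          ∫ y in Set.Ioi (0 : ℝ), y ^ n * f y := by
      rw [integral_fun_norm_addHaar, hdim, volume_real_ball_prodL2]
      simp [mul_assoc]
    _ ≤ _ := by
      gcongr
      exact h.setIntegral_Ioi_le hr hR n

/-- The vertical primitive `t ↦ ∫₀ᵗ χ(a + s²) ds` has continuous partial derivatives in `(a, t)`. -/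
theorem hasStrictFDerivAt_primitive (h : IsCutoff χ r R) (a t : ℝ) :
    HasStrictFDerivAt (fun p : ℝ × ℝ => ∫ s in (0 : ℝ)..p.2, χ (p.1 + s ^ 2))
      ((ContinuousLinearMap.toSpanSingleton ℝ (∫ s in (0 : ℝ)..t, deriv χ (a + s ^ 2))).coprod
        (ContinuousLinearMap.toSpanSingleton ℝ (χ (a + t ^ 2)))) (a, t) := by
  have hc := h.continuous
  have hc' := h.continuous_deriv
  have hK : Continuous fun p : ℝ × ℝ => ∫ s in (0 : ℝ)..p.2, deriv χ (p.1 + s ^ 2) :=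
    intervalIntegral.continuous_parametric_intervalIntegral_of_continuous (by fun_prop)
      continuous_snd
  refine hasStrictFDerivAt_uncurry_coprod (𝕜 := ℝ) (u := (a, t))
    (f := fun a t => ∫ s in (0 : ℝ)..t, χ (a + s ^ 2))
    (f₁ := fun a t => ContinuousLinearMap.toSpanSingleton ℝ
      (∫ s in (0 : ℝ)..t, deriv χ (a + s ^ 2)))
    (f₂ := fun a t => ContinuousLinearMap.toSpanSingleton ℝ (χ (a + t ^ 2)))
    (Eventually.of_forall fun v => ?_) (Eventually.of_forall fun v => ?_) ?_ ?_
  · obtain ⟨C, hC⟩ := ((isCompact_Icc (a := v.1 - 1) (b := R)).exists_bound_of_continuousOn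
      hc'.continuousOn)
    refine (intervalIntegral.hasDerivAt_integral_of_dominated_loc_of_deriv_le (a := 0) (b := v.2)
      (F := fun a s => χ (a + s ^ 2)) (F' := fun a s => deriv χ (a + s ^ 2)) (x₀ := v.1)
      (bound := fun _ => |C|) (ball_mem_nhds v.1 one_pos)
      (Eventually.of_forall fun a => (Continuous.aestronglyMeasurable (by fun_prop)))
      (Continuous.intervalIntegrable (by fun_prop) _ _)
      (Continuous.aestronglyMeasurable (by fun_prop))
      (Eventually.of_forall fun s _ a ha => ?_) intervalIntegrable_const
      (Eventually.of_forall fun s _ a _ => ?_)).2.hasFDerivAt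
    · rcases le_total R (a + s ^ 2) with h1 | h1
      · rw [h.deriv_eq_zero h1]; simp
      · have ha' := abs_lt.1 (Real.dist_eq a v.1 ▸ mem_ball.1 ha)
        exact (hC _ ⟨by nlinarith [sq_nonneg s, ha'.1], h1⟩).trans (le_abs_self C)
    · exact (h.hasDerivAt _).comp_add_const a (s ^ 2)
  · exact (intervalIntegral.integral_hasStrictDerivAt_right
      (Continuous.intervalIntegrable (by fun_prop) _ _)
      (Continuous.stronglyMeasurableAtFilter (by fun_prop) _ _)
      (Continuous.continuousAt (by fun_prop))).hasDerivAt.hasFDerivAt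
  · exact ((ContinuousLinearMap.toSpanSingletonCLE (𝕜 := ℝ) (E := ℝ)).continuous.comp
      hK).continuousAt
  · exact ((ContinuousLinearMap.toSpanSingletonCLE (𝕜 := ℝ) (E := ℝ)).continuous.comp
      (by fun_prop : Continuous fun p : ℝ × ℝ => χ (p.1 + p.2 ^ 2))).continuousAt

theorem hasFDerivAt_primitive (h : IsCutoff χ r R) (a t : ℝ) :
    HasFDerivAt (fun p : ℝ × ℝ => ∫ s in (0 : ℝ)..p.2, χ (p.1 + s ^ 2))
      ((∫ s in (0 : ℝ)..t, deriv χ (a + s ^ 2)) • ContinuousLinearMap.fst ℝ ℝ ℝ +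
        χ (a + t ^ 2) • ContinuousLinearMap.snd ℝ ℝ ℝ) (a, t) := by
  refine (h.hasStrictFDerivAt_primitive a t).hasFDerivAt.congr_fderiv ?_
  ext <;> simp

theorem abs_integral_deriv_le (h : IsCutoff χ r (R ^ 2)) {a : ℝ} (ha : 0 ≤ a) (t : ℝ)
    (hR : 0 < R) :
    2 * |∫ s in (0 : ℝ)..t, deriv χ (a + s ^ 2)| ≤ ∫ s : ℝ, -deriv χ (a + s ^ 2) := by
  have hc := h.continuous_deriv
  have hintegrable : Integrable fun s : ℝ => -deriv χ (a + s ^ 2) := by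
    refine Continuous.integrable_of_hasCompactSupport (by fun_prop)
      (HasCompactSupport.intro (isCompact_closedBall (0 : ℝ) R) fun s hs => ?_)
    rw [mem_closedBall, dist_zero_right, Real.norm_eq_abs, not_le] at hs
    rw [h.deriv_eq_zero (by nlinarith [sq_abs s]), neg_zero]
  have hpos : ∀ t : ℝ, 0 ≤ t → |∫ s in (0 : ℝ)..t, deriv χ (a + s ^ 2)| ≤
      ∫ s in Set.Ioi (0 : ℝ), -deriv χ (a + s ^ 2) := fun t ht => by
    rw [← abs_neg, ← intervalIntegral.integral_neg, intervalIntegral.integral_of_le ht,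
      abs_of_nonneg (integral_nonneg fun s => neg_nonneg.2 (h.deriv_nonpos _))]
    exact setIntegral_mono_set hintegrable.integrableOn
      (Eventually.of_forall fun s => neg_nonneg.2 (h.deriv_nonpos _))
      (Eventually.of_forall fun s hs => hs.1)
  have habs : |∫ s in (0 : ℝ)..t, deriv χ (a + s ^ 2)| ≤
      ∫ s in Set.Ioi (0 : ℝ), -deriv χ (a + s ^ 2) := by
    rcases le_total 0 t with ht | ht
    · exact hpos t ht
    · have h1 := intervalIntegral.integral_comp_neg (a := 0) (b := t)
        (fun s => deriv χ (a + s ^ 2))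
      simp only [even_two, Even.neg_pow, neg_zero] at h1
      rw [h1, intervalIntegral.integral_symm, abs_neg]
      exact hpos (-t) (by linarith)
  have h2 := integral_comp_abs (f := fun s => -deriv χ (a + s ^ 2))
  simp only [sq_abs] at h2
  linarith

theorem abs_integral_le (h : IsCutoff χ r R) (a t : ℝ) :
    |∫ s in (0 : ℝ)..t, χ (a + s ^ 2)| ≤ |t| := by
  have := intervalIntegral.norm_integral_le_of_norm_le_const (a := 0) (b := t) (C := 1)
    (f := fun s => χ (a + s ^ 2)) fun s _ => by
      rw [Real.norm_eq_abs, abs_of_nonneg (h.nonneg _)]; exact h.le_one _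
  simpa using this

end IsCutoff

/-- The divergence theorem for a compactly supported multiple of a `C¹` vector field. -/
theorem integral_fderiv_apply_add_mul_sum_eq_zero {n : ℕ} {g : E n → ℝ} {V : E n → E n}
    (hg : ContDiff ℝ 1 g) (hs : HasCompactSupport g) (hV : ContDiff ℝ 1 V) :
    Integrable (fun x => fderiv ℝ g x (V x) +
      g x * ∑ i, fderiv ℝ (fun y => V y i) x (EuclideanSpace.single i 1)) ∧
    ∫ x, (fderiv ℝ g x (V x) +
      g x * ∑ i, fderiv ℝ (fun y => V y i) x (EuclideanSpace.single i 1)) = 0 := by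
  have hVi : ∀ i, ContDiff ℝ 1 fun y => V y i := contDiff_euclidean.1 hV
  have hc : ∀ i, Continuous fun y => V y i := fun i => (hVi i).continuous
  have hgc := hg.continuous
  have hfc : ∀ i, Continuous fun x => fderiv ℝ g x (EuclideanSpace.single i 1) := fun i =>
    (hg.continuous_fderiv one_ne_zero).clm_apply continuous_const
  have hfVc : ∀ i, Continuous fun x =>
      fderiv ℝ (fun y => V y i) x (EuclideanSpace.single i 1) := fun i =>
    ((hVi i).continuous_fderiv one_ne_zero).clm_apply continuous_const
  have hintegrable1 : ∀ i, Integrable fun x =>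
      fderiv ℝ g x (EuclideanSpace.single i 1) * V x i := fun i =>
    ((hfc i).mul (hc i)).integrable_of_hasCompactSupport
      ((hs.fderiv_apply (𝕜 := ℝ) _).mul_right)
  have hintegrable2 : ∀ i, Integrable fun x =>
      g x * fderiv ℝ (fun y => V y i) x (EuclideanSpace.single i 1) := fun i =>
    (hgc.mul (hfVc i)).integrable_of_hasCompactSupport hs.mul_right
  have hexp : ∀ x, fderiv ℝ g x (V x) +
      g x * ∑ i, fderiv ℝ (fun y => V y i) x (EuclideanSpace.single i 1) =
      ∑ i, (fderiv ℝ g x (EuclideanSpace.single i 1) * V x i +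
        g x * fderiv ℝ (fun y => V y i) x (EuclideanSpace.single i 1)) := fun x => by
    rw [Finset.sum_add_distrib, Finset.mul_sum]
    congr 1
    conv_lhs => rw [← (EuclideanSpace.basisFun (Fin n) ℝ).sum_repr (V x)]
    simp [mul_comm]
  simp_rw [hexp]
  have hintegrable : ∀ i ∈ Finset.univ, Integrable fun x =>
      fderiv ℝ g x (EuclideanSpace.single i 1) * V x i +
        g x * fderiv ℝ (fun y => V y i) x (EuclideanSpace.single i 1) := fun i _ =>
    (hintegrable1 i).add (hintegrable2 i)
  refine ⟨integrable_finsetSum _ hintegrable, ?_⟩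
  rw [integral_finsetSum _ hintegrable]
  refine Finset.sum_eq_zero fun i _ => ?_
  rw [integral_add (hintegrable1 i) (hintegrable2 i),
    integral_mul_fderiv_eq_neg_fderiv_mul_of_integrable
    (hintegrable1 i) (hintegrable2 i)
    ((hgc.mul (hc i)).integrable_of_hasCompactSupport hs.mul_right)
    (fun x _ => hg.differentiable one_ne_zero x)
    fun x _ => (hVi i).differentiable one_ne_zero x, add_neg_cancel]

theorem contDiff_gradient {n : ℕ} {u : E n → ℝ} (hu : ContDiff ℝ 2 u) :
    ContDiff ℝ 1 (gradient u) := by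
  refine contDiff_euclidean.2 fun i => ?_
  have : (fun x => gradient u x i) = fun x => fderiv ℝ u x (EuclideanSpace.single i 1) := by
    ext x
    rw [← inner_gradient_left, EuclideanSpace.inner_single_right]
    simp
  rw [this]
  exact (hu.fderiv_right (m := 1) (by norm_num)).clm_apply contDiff_const

theorem aEl_pos {n : ℕ} (u : E n → ℝ) (x : E n) : 0 < aEl u x :=
  Real.sqrt_pos.2 (by positivity)

theorem aEl_sq {n : ℕ} (u : E n → ℝ) (x : E n) : aEl u x ^ 2 = 1 + ‖gradient u x‖ ^ 2 :=
  Real.sq_sqrt (by positivity)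

theorem one_le_aEl {n : ℕ} (u : E n → ℝ) (x : E n) : 1 ≤ aEl u x := by
  nlinarith [aEl_sq u x, aEl_pos u x, sq_nonneg ‖gradient u x‖]

theorem contDiff_aEl {n : ℕ} {u : E n → ℝ} (hu : ContDiff ℝ 2 u) : ContDiff ℝ 1 (aEl u) :=
  (contDiff_const.add ((contDiff_gradient hu).norm_sq ℝ)).sqrt fun x => by positivity

theorem contDiff_Vfield {n : ℕ} {u : E n → ℝ} (hu : ContDiff ℝ 2 u) : ContDiff ℝ 1 (Vfield u) :=
  ((contDiff_aEl hu).inv fun x => (aEl_pos u x).ne').smul (contDiff_gradient hu)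

theorem norm_Vfield_le_one {n : ℕ} (u : E n → ℝ) (x : E n) : ‖Vfield u x‖ ≤ 1 := by
  rw [Vfield, norm_smul, norm_inv, Real.norm_of_nonneg (aEl_pos u x).le,
    inv_mul_le_one₀ (aEl_pos u x)]
  exact Real.le_sqrt_of_sq_le (by linarith)

theorem aEl_eq {n : ℕ} (u : E n → ℝ) (x : E n) :
    aEl u x = (aEl u x)⁻¹ + ⟪gradient u x, Vfield u x⟫ := by
  have h := (aEl_pos u x).ne'
  rw [Vfield, inner_smul_right, real_inner_self_eq_norm_sq]
  field_simp
  exact aEl_sq u x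

theorem ShrinkerEq.abs_mul_divV_le {n : ℕ} {u : E n → ℝ} (hshr : ShrinkerEq u) (x : E n) :
    |u x| * |divV u x| ≤ (‖x‖ ^ 2 + u x ^ 2) / 2 := by
  have hW := aEl_pos u x
  have hcs := abs_le.1 (abs_real_inner_le_norm x (gradient u x))
  have hsq : (⟪x, gradient u x⟫ - u x) ^ 2 ≤ (‖x‖ ^ 2 + u x ^ 2) * aEl u x ^ 2 := by
    rw [aEl_sq]
    have h1 : ⟪x, gradient u x⟫ ^ 2 ≤ (‖x‖ * ‖gradient u x‖) ^ 2 :=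
      sq_le_sq' hcs.1 hcs.2
    have h2 : |⟪x, gradient u x⟫ * u x| ≤ ‖x‖ * ‖gradient u x‖ * |u x| := by
      rw [abs_mul]
      gcongr
      exact abs_real_inner_le_norm _ _
    nlinarith [neg_abs_le (⟪x, gradient u x⟫ * u x), sq_nonneg (‖x‖ - ‖gradient u x‖ * |u x|),
      sq_abs (u x)]
  rw [hshr x, abs_div, abs_of_pos (by positivity : 0 < 2 * aEl u x), ← mul_div_assoc,
    div_le_div_iff₀ (by positivity) two_pos]
  have h3 : |u x| ≤ √(‖x‖ ^ 2 + u x ^ 2) := Real.abs_le_sqrt (by nlinarith [sq_nonneg ‖x‖])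
  have h4 : |⟪x, gradient u x⟫ - u x| ≤ √(‖x‖ ^ 2 + u x ^ 2) * aEl u x := by
    refine abs_le_of_sq_le_sq ?_ (by positivity)
    rwa [mul_pow, Real.sq_sqrt (by positivity)]
  have h5 := mul_le_mul h3 h4 (abs_nonneg _) (Real.sqrt_nonneg _)
  rw [← mul_assoc, Real.mul_self_sqrt (by positivity)] at h5
  linarith

theorem norm_Pos_sq {n : ℕ} (u : E n → ℝ) (x : E n) : ‖Pos u x‖ ^ 2 = ‖x‖ ^ 2 + u x ^ 2 := by
  simp [EuclideanSpace.norm_sq_eq, Fin.sum_univ_castSucc, Pos]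

theorem abs_le_supBall {n : ℕ} {u : E n → ℝ} (hu : Continuous u) {x : E n} {R : ℝ}
    (hx : ‖x‖ ≤ R) : |u x| ≤ supBall u R := by
  have hb : BddAbove (Set.range fun x : closedBall (0 : E n) R => |u x.1|) :=
    (isCompact_range (f := fun x : closedBall (0 : E n) R => |u x.1|) (by fun_prop)).bddAbove
  exact le_ciSup hb ⟨x, mem_closedBall_zero_iff.2 hx⟩

theorem supBall_eq_sSup {n : ℕ} (u : E n → ℝ) {R : ℝ} (hR : 0 < R) :
    supBall u R = sSup ((fun y : E n => |u (R • y)|) '' closedBall 0 1) := by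
  have h : closedBall (0 : E n) R = (fun y => R • y) '' closedBall 0 1 := by
    have := smul_unitClosedBall (E := E n) R
    rw [Real.norm_of_nonneg hR.le] at this
    exact this.symm
  have h' := sSup_image' (s := closedBall (0 : E n) R) (f := fun x => |u x|)
  rw [h, Set.image_image] at h'
  rw [h', ← h]
  rfl

theorem tendsto_supBall {n : ℕ} {u : E n → ℝ} (hu : Continuous u) {R : ℝ} (hR : 0 < R) :
    Tendsto (supBall u) (nhds R) (nhds (supBall u R)) := by
  have hc : Continuous fun r : ℝ => sSup ((fun y : E n => |u (r • y)|) '' closedBall 0 1) :=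
    (isCompact_closedBall (0 : E n) 1).continuous_sSup (f := fun r y => |u (r • y)|)
      (by unfold Function.HasUncurry.uncurry; fun_prop)
  rw [supBall_eq_sSup u hR]
  refine (hc.tendsto R).congr' ?_
  filter_upwards [lt_mem_nhds hR] with r hr using (supBall_eq_sSup u hr).symm

namespace IsCutoff

variable {χ : ℝ → ℝ} {r R : ℝ} {n : ℕ} {u : E n → ℝ}

theorem contDiff_primitive (h : IsCutoff χ r R) :
    ContDiff ℝ 1 fun p : ℝ × ℝ => ∫ s in (0 : ℝ)..p.2, χ (p.1 + s ^ 2) := by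
  have hc := h.continuous
  have hc' := h.continuous_deriv
  have hK : Continuous fun p : ℝ × ℝ => ∫ s in (0 : ℝ)..p.2, deriv χ (p.1 + s ^ 2) :=
    intervalIntegral.continuous_parametric_intervalIntegral_of_continuous (by fun_prop)
      continuous_snd
  exact contDiff_one_iff_hasFDerivAt.2 ⟨fun p =>
    (∫ s in (0 : ℝ)..p.2, deriv χ (p.1 + s ^ 2)) • ContinuousLinearMap.fst ℝ ℝ ℝ +
      χ (p.1 + p.2 ^ 2) • ContinuousLinearMap.snd ℝ ℝ ℝ,
    by fun_prop, fun p => h.hasFDerivAt_primitive p.1 p.2⟩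

theorem contDiff_primitive_comp (h : IsCutoff χ r R) (hu : ContDiff ℝ 1 u) :
    ContDiff ℝ 1 fun x => ∫ s in (0 : ℝ)..u x, χ (‖x‖ ^ 2 + s ^ 2) :=
  h.contDiff_primitive.comp ((contDiff_norm_sq ℝ).prodMk hu)

theorem fderiv_primitive_comp (h : IsCutoff χ r R) (hu : ContDiff ℝ 1 u) (x v : E n) :
    fderiv ℝ (fun x => ∫ s in (0 : ℝ)..u x, χ (‖x‖ ^ 2 + s ^ 2)) x v =
      (∫ s in (0 : ℝ)..u x, deriv χ (‖x‖ ^ 2 + s ^ 2)) * (2 * ⟪x, v⟫) +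
        χ (‖x‖ ^ 2 + u x ^ 2) * ⟪gradient u x, v⟫ := by
  have h1 : HasFDerivAt (fun x => (‖x‖ ^ 2, u x)) _ x :=
    (hasStrictFDerivAt_norm_sq x).hasFDerivAt.prodMk
      (hu.differentiable one_ne_zero x).hasFDerivAt
  have h2 := (h.hasFDerivAt_primitive (‖x‖ ^ 2) (u x)).comp x h1
  rw [show (fun x => ∫ s in (0 : ℝ)..u x, χ (‖x‖ ^ 2 + s ^ 2)) =
    (fun p : ℝ × ℝ => ∫ s in (0 : ℝ)..p.2, χ (p.1 + s ^ 2)) ∘ fun x => (‖x‖ ^ 2, u x) from rfl,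
    h2.fderiv, inner_gradient_left]
  simp

theorem primitive_eq_zero (h : IsCutoff χ r R) {a : ℝ} (ha : R ≤ a) (t : ℝ) :
    ∫ s in (0 : ℝ)..t, χ (a + s ^ 2) = 0 := by
  have : ∀ s, χ (a + s ^ 2) = 0 := fun s => h.eq_zero _ (by nlinarith [sq_nonneg s])
  simp [this]

theorem mul_aEl_le (h : IsCutoff χ r (R ^ 2)) (hR : 0 < R) (hu : ContDiff ℝ 1 u)
    (hshr : ShrinkerEq u) (x : E n) :
    χ (‖x‖ ^ 2 + u x ^ 2) * aEl u x ≤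
      (fderiv ℝ (fun x => ∫ s in (0 : ℝ)..u x, χ (‖x‖ ^ 2 + s ^ 2)) x (Vfield u x) +
        (∫ s in (0 : ℝ)..u x, χ (‖x‖ ^ 2 + s ^ 2)) * divV u x) +
      (closedBall (0 : E n) R).indicator
        (fun _ => 1 + (R ^ 2 + supBall u R ^ 2) / 2) x +
      (∫ s : ℝ, 2 * ‖x‖ * -deriv χ (‖x‖ ^ 2 + s ^ 2)) / 2 := by
  rw [h.fderiv_primitive_comp hu, integral_const_mul]
  set g := ∫ s in (0 : ℝ)..u x, χ (‖x‖ ^ 2 + s ^ 2) with hg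
  set K := ∫ s in (0 : ℝ)..u x, deriv χ (‖x‖ ^ 2 + s ^ 2) with hK
  have hχ0 := h.nonneg (‖x‖ ^ 2 + u x ^ 2)
  have hV : |⟪x, Vfield u x⟫| ≤ ‖x‖ := (abs_real_inner_le_norm _ _).trans
    (mul_le_of_le_one_right (norm_nonneg _) (norm_Vfield_le_one u x))
  have hKV : -(K * (2 * ⟪x, Vfield u x⟫)) ≤
      2 * ‖x‖ * (∫ s : ℝ, -deriv χ (‖x‖ ^ 2 + s ^ 2)) / 2 := by
    have h1 := h.abs_integral_deriv_le (sq_nonneg ‖x‖) (u x) hR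
    calc -(K * (2 * ⟪x, Vfield u x⟫)) ≤ |K * (2 * ⟪x, Vfield u x⟫)| := neg_le_abs _
      _ = 2 * |K| * |⟪x, Vfield u x⟫| := by rw [abs_mul, abs_mul, abs_two]; ring
      _ ≤ (∫ s : ℝ, -deriv χ (‖x‖ ^ 2 + s ^ 2)) * ‖x‖ :=
        mul_le_mul h1 hV (abs_nonneg _) ((by positivity : (0 : ℝ) ≤ 2 * |K|).trans h1)
      _ = _ := by ring
  have hrest : χ (‖x‖ ^ 2 + u x ^ 2) * (aEl u x)⁻¹ - g * divV u x ≤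
      (closedBall (0 : E n) R).indicator (fun _ => 1 + (R ^ 2 + supBall u R ^ 2) / 2) x := by
    by_cases hx : x ∈ closedBall (0 : E n) R
    · rw [Set.indicator_of_mem hx]
      rw [mem_closedBall_zero_iff] at hx
      have h1 : χ (‖x‖ ^ 2 + u x ^ 2) * (aEl u x)⁻¹ ≤ 1 :=
        mul_le_one₀ (h.le_one _) (inv_nonneg.2 (aEl_pos u x).le)
          (inv_le_one_of_one_le₀ (one_le_aEl u x))
      have h2 : -(g * divV u x) ≤ |u x| * |divV u x| := by
        refine (neg_le_abs _).trans ?_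
        rw [abs_mul]
        exact mul_le_mul_of_nonneg_right (h.abs_integral_le _ _) (abs_nonneg _)
      have h3 := hshr.abs_mul_divV_le x
      have h4 : ‖x‖ ^ 2 ≤ R ^ 2 := by gcongr
      have h5 : u x ^ 2 ≤ supBall u R ^ 2 := by
        rw [← sq_abs]
        gcongr
        exact abs_le_supBall hu.continuous hx
      linarith
    · rw [Set.indicator_of_notMem hx]
      rw [mem_closedBall_zero_iff, not_le] at hx
      have h1 : R ^ 2 ≤ ‖x‖ ^ 2 := by gcongr
      rw [hg, h.primitive_eq_zero h1, h.eq_zero _ (by nlinarith [sq_nonneg (u x)])]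
      simp
  have hW : χ (‖x‖ ^ 2 + u x ^ 2) * aEl u x = χ (‖x‖ ^ 2 + u x ^ 2) * (aEl u x)⁻¹ +
      χ (‖x‖ ^ 2 + u x ^ 2) * ⟪gradient u x, Vfield u x⟫ := by
    conv_lhs => rw [aEl_eq u x]
    ring
  linarith

end IsCutoff

theorem sVol_le_integral {n : ℕ} {u : E n → ℝ} {χ : ℝ → ℝ} {r R : ℝ} (hu : ContDiff ℝ 2 u)
    (h : IsCutoff χ (r ^ 2) (R ^ 2)) (hr : 0 ≤ r) (hR : 0 < R) :
    Integrable (fun x => χ (‖x‖ ^ 2 + u x ^ 2) * aEl u x) ∧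
      sVol u r ≤ ∫ x, χ (‖x‖ ^ 2 + u x ^ 2) * aEl u x := by
  have hc := h.continuous
  have huc := hu.continuous
  have hW := (contDiff_aEl hu).continuous
  have hintegrable : Integrable fun x => χ (‖x‖ ^ 2 + u x ^ 2) * aEl u x := by
    refine Continuous.integrable_of_hasCompactSupport (by fun_prop)
      (HasCompactSupport.intro (isCompact_closedBall (0 : E n) R) fun x hx => ?_)
    rw [mem_closedBall_zero_iff, not_le] at hx
    rw [h.eq_zero _ (by nlinarith [sq_nonneg (u x)]), zero_mul]
  have hset : {x : E n | ‖Pos u x‖ ≤ r} = {x | ‖x‖ ^ 2 + u x ^ 2 ≤ r ^ 2} := by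
    ext x
    rw [Set.mem_ofPred_eq, Set.mem_ofPred_eq, ← norm_Pos_sq, sq_le_sq₀ (norm_nonneg _) hr]
  have hmeas : MeasurableSet {x : E n | ‖x‖ ^ 2 + u x ^ 2 ≤ r ^ 2} :=
    (isClosed_le (by fun_prop) continuous_const).measurableSet
  refine ⟨hintegrable, ?_⟩
  rw [sVol, hset, ← integral_indicator hmeas]
  refine integral_mono_of_nonneg
    (Eventually.of_forall fun x => Set.indicator_nonneg (fun x _ => (aEl_pos u x).le) x) hintegrable
    (Eventually.of_forall (Set.indicator_le' (fun x hx => ?_) fun x _ => ?_))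
  · rw [h.eq_one _ hx, one_mul]
  · exact mul_nonneg (h.nonneg _) (aEl_pos u x).le

theorem ShrinkerEq.sVol_le_of_lt {n : ℕ} {u : E n → ℝ} (hshr : ShrinkerEq u)
    (hu : ContDiff ℝ 2 u) {r R : ℝ} (hr : 0 < r) (hrR : r < R) :
    sVol u r ≤ R ^ n * volume.real (ball (0 : E n) 1) * (1 + (R ^ 2 + supBall u R ^ 2) / 2) +
      (n + 1) * volume.real (ball (0 : E (n + 1)) 1) * R ^ n / 2 := by
  have hR := hr.trans hrR
  obtain ⟨χ, h⟩ := exists_isCutoff (pow_lt_pow_left₀ hrR hr.le two_ne_zero)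
  have hu1 : ContDiff ℝ 1 u := hu.of_le one_le_two
  obtain ⟨hF, hle⟩ := sVol_le_integral hu h hr.le hR
  have hs : HasCompactSupport fun x : E n => ∫ s in (0 : ℝ)..u x, χ (‖x‖ ^ 2 + s ^ 2) := by
    refine HasCompactSupport.intro (isCompact_closedBall (0 : E n) R) fun x hx => ?_
    rw [mem_closedBall_zero_iff, not_le] at hx
    exact h.primitive_eq_zero (by gcongr) _
  obtain ⟨hZ, hZ0⟩ := integral_fderiv_apply_add_mul_sum_eq_zero (h.contDiff_primitive_comp hu1) hs
    (contDiff_Vfield hu)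
  have hQ : Integrable fun x : E n => ∫ s : ℝ, 2 * ‖x‖ * -deriv χ (‖x‖ ^ 2 + s ^ 2) :=
    (h.integrable_norm_mul_deriv hR).integral_prod_left
  have hQ' : ∫ x : E n, ∫ s : ℝ, 2 * ‖x‖ * -deriv χ (‖x‖ ^ 2 + s ^ 2) ≤
      (n + 1) * volume.real (ball (0 : E (n + 1)) 1) * R ^ n := by
    have := h.integral_norm_mul_deriv_le (n := n) (sq_nonneg r) hR
    rwa [Measure.volume_eq_prod, integral_prod _ (h.integrable_norm_mul_deriv hR)] at this
  have hI : Integrable ((closedBall (0 : E n) R).indicator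
      fun _ => 1 + (R ^ 2 + supBall u R ^ 2) / 2) :=
    (integrable_indicator_iff measurableSet_closedBall).2
      (integrableOn_const measure_closedBall_lt_top.ne)
  have hmono := integral_mono hF ((hZ.add hI).add (hQ.div_const 2)) fun x =>
    h.mul_aEl_le hR hu1 hshr x
  rw [integral_add' (hZ.add hI) (hQ.div_const 2), integral_add' hZ hI, hZ0,
    integral_indicator measurableSet_closedBall, setIntegral_const,
    Measure.addHaar_real_closedBall _ _ hR.le, integral_div, finrank_euclideanSpace_fin,
    smul_eq_mul, zero_add] at hmono
  linarith

/-- volume estimate `Vol(Σ ∩ B_R) ≤ 2ωₙ Rⁿ (1 + R² + M_R²)` for an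
entire graphical self-shrinker. -/
theorem stmt_9 (n : ℕ) (u : E n → ℝ) (hu : ContDiff ℝ (⊤ : ℕ∞) u) (hshr : ShrinkerEq u) :
    ∀ R > (0 : ℝ), sVol u R ≤
      2 * halfSphereVol n * R ^ n * (1 + R ^ 2 + (supBall u R) ^ 2) := by
  intro R hR
  have hu2 : ContDiff ℝ 2 u := contDiff_infty.1 hu 2
  have hlim : Tendsto
      (fun s => 2 * halfSphereVol n * s ^ n * (1 + s ^ 2 + (supBall u s) ^ 2))
      (nhdsWithin R (Set.Ioi R))
      (nhds (2 * halfSphereVol n * R ^ n * (1 + R ^ 2 + (supBall u R) ^ 2))) := by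
    have hid : Tendsto (fun s : ℝ => s) (nhds R) (nhds R) := tendsto_id
    exact (((hid.pow n).const_mul _).mul (((hid.pow 2).const_add 1).add
      ((tendsto_supBall hu2.continuous hR).pow 2))).mono_left nhdsWithin_le_nhds
  refine ge_of_tendsto hlim ?_
  filter_upwards [self_mem_nhdsWithin] with s hs
  have hs0 : 0 < s := hR.trans hs
  refine (hshr.sVol_le_of_lt hu2 hR hs).trans ?_
  have h1 := two_mul_volume_ball_le n
  have h2 : (n + 1) * volume.real (ball (0 : E (n + 1)) 1) ≤ 2 * halfSphereVol n := by
    have := mul_volume_ball_le_hausdorffMeasure_sphere n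
    rw [halfSphereVol]
    linarith
  have h3 : 0 ≤ s ^ n := by positivity
  have h4 : 0 ≤ s ^ 2 + supBall u s ^ 2 := by positivity
  have h5 : 0 ≤ volume.real (ball (0 : E n) 1) := measureReal_nonneg
  calc _ ≤ s ^ n * (halfSphereVol n * (1 + (s ^ 2 + supBall u s ^ 2) / 2)) +
        2 * halfSphereVol n * s ^ n / 2 := by
        rw [mul_assoc]
        gcongr
        linarith
    _ = s ^ n * halfSphereVol n * (2 + (s ^ 2 + supBall u s ^ 2) / 2) := by ring
    _ ≤ s ^ n * halfSphereVol n * (2 * (1 + (s ^ 2 + supBall u s ^ 2))) := by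
        have : 0 ≤ halfSphereVol n := by linarith
        gcongr
        linarith
    _ = _ := by ring
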